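/- arXiv:1604.06282 — 4 statements merged into one kernel-verified Lean document; each statement's English description precedes it below -/
import Mathlib

section
/- Let X₀ ⊆ dom F and Y₀ ⊆ dom G be bounded with X₀ × Y₀ containing a saddle point, let σ, τ > 0, T = I + στK*K on X, and let M be a feasible preconditioner for T. Let sequences (xᵏ), (yᵏ), (x̄ᵏ), (ȳᵏ), (dᵏ) satisfy for every k ≥ 0: (x̄ᵏ − xᵏ⁺¹)/σ ∈ ∂F(xᵏ⁺¹), (ȳᵏ − yᵏ⁺¹)/τ ∈ ∂G(yᵏ⁺¹), bᵏ⁺¹ = (2xᵏ⁺¹ − x̄ᵏ) − σK*(2yᵏ⁺¹ − ȳᵏ), dᵏ⁺¹ = dᵏ + M⁻¹(bᵏ⁺¹ − Tdᵏ), x̄ᵏ⁺¹ = x̄ᵏ − xᵏ⁺¹ + dᵏ⁺¹, ȳᵏ⁺¹ = yᵏ⁺¹ + τKdᵏ⁺¹. Then (xᵏ, yᵏ) converges weakly to a saddle point (x*, y*), the ergodic sequences x_erg^k = (1/k)∑_{j=1}^k xʲ and y_erg^k = (1/k)∑_{j=1}^k yʲ converge weakly to (x*, y*), and for every k ≥ 1: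 𝔊_{X₀×Y₀}(x_erg^k, y_erg^k) ≤ (1/k)·sup_{(x,y)∈X₀×Y₀} [‖x̄⁰ − x + σK*y‖²/(2σ) + ⟨(M − T)(d⁰ − x), d⁰ − x⟩/(2σ) + ‖ȳ⁰ − y − τKx‖²/(2τ)]. -/
/-!
The iteration is a proximal point step in disguise. With `D = M - T`, eliminating the proximal
outputs turns it into an implicit equation for the states `(x̄ᵏ, dᵏ, ȳᵏ)`, and the Lyapunov function
`lyap`, half the squared distance of the state to the fixed point `(x - σK*y, x, y + τKx)` attached
to `(x, y)` in the seminorm weighted by `σ⁻¹ I`, `σ⁻¹ D`, `τ⁻¹ I`, decreases by exactly half a squared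
increment plus a cross term (`Orbit.cross_eq_sub`). The cross term equals the proximal inequalities
plus the bilinear coupling (`Orbit.cross_eq`), hence dominates `L(xᵏ⁺¹, y) - L(x, yᵏ⁺¹)`
(`Orbit.gapTerm_le_cross`). Telescoping and Jensen's inequality (`gapTerm_mean_le`) give the ergodic
gap estimate.

At a saddle point the cross term is nonnegative, so the Lyapunov function converges and the
increments vanish. The states `x̄ᵏ`, `ȳᵏ` are then bounded; `dᵏ` is bounded although `D` may be
degenerate, because the residual of `T dᵏ = x̄ᵏ + σK*ȳᵏ` vanishes (`Orbit.tendsto_residual`) and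
`T ≥ I`. Weak cluster points, taken along ultrafilters (`exists_weakLim`), are saddle points: the
cross terms vanish at every `(x, y)` (`Orbit.tendsto_cross`), and weak lower semicontinuity
(`weak_lsc`) passes the gap inequality to the limit (`isSaddle_of_weakLim`). They all coincide by
Opial's argument (`Orbit.cluster_unique`), so the whole sequence converges weakly, and Cesàro means
inherit the limit.
-/

open scoped RealInnerProductSpace
open Filter

noncomputable section

variable {X Y : Type*} [NormedAddCommGroup X] [InnerProductSpace ℝ X] [CompleteSpace X]
  [NormedAddCommGroup Y] [InnerProductSpace ℝ Y] [CompleteSpace Y]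

/-- The convex subdifferential of an extended-real-valued functional. -/
def ediff (F : X → EReal) (x : X) : Set X :=
  {ξ : X | ∀ z : X, F x + ((⟪ξ, z - x⟫ : ℝ) : EReal) ≤ F z}

/-- The effective domain. -/
def edom (F : X → EReal) : Set X := {x : X | F x ≠ ⊤}

/-- Properness: nowhere `⊥` and somewhere finite. -/
def Proper (F : X → EReal) : Prop := (∀ x, F x ≠ ⊥) ∧ ∃ x, F x ≠ ⊤

/-- Convexity of an extended-real-valued functional. -/
def ConvexE (F : X → EReal) : Prop :=
  ∀ x z : X, ∀ l : ℝ, 0 ≤ l → l ≤ 1 →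
    F (l • x + (1 - l) • z) ≤ (l : EReal) * F x + ((1 - l : ℝ) : EReal) * F z

/-- Saddle points of the Lagrangian `L(x,y) = ⟪Kx, y⟫ + F(x) - G(y)`. -/
def IsSaddle (K : X →L[ℝ] Y) (F : X → EReal) (G : Y → EReal) (xs : X) (ys : Y) : Prop :=
  xs ∈ edom F ∧ ys ∈ edom G ∧
    (-(ContinuousLinearMap.adjoint K) ys) ∈ ediff F xs ∧ K xs ∈ ediff G ys

/-- The restricted primal-dual gap `𝔊_{X₀ × Y₀}`. -/
def gap (K : X →L[ℝ] Y) (F : X → EReal) (G : Y → EReal)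
    (X₀ : Set X) (Y₀ : Set Y) (x : X) (y : Y) : EReal :=
  ⨆ x' ∈ X₀, ⨆ y' ∈ Y₀,
    (((⟪K x, y'⟫ - ⟪K x', y⟫ - (G y').toReal - (F x').toReal : ℝ) : EReal) + F x + G y)

/-- Weak convergence in a Hilbert space. -/
def WeakTendsto (u : ℕ → X) (z : X) : Prop :=
  ∀ w : X, Tendsto (fun k => ⟪u k, w⟫) atTop (nhds ⟪z, w⟫)

/-- `M` is a feasible preconditioner for `T`: both are self-adjoint and positive semidefinite,
`M` is boundedly invertible and `M - T` is positive semidefinite. -/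
def IsFeasiblePrecond (M T : X →L[ℝ] X) : Prop :=
  (∀ x y : X, ⟪M x, y⟫ = ⟪x, M y⟫) ∧ (∀ x y : X, ⟪T x, y⟫ = ⟪x, T y⟫) ∧
  (∀ x : X, 0 ≤ ⟪M x, x⟫) ∧ (∀ x : X, 0 ≤ ⟪T x, x⟫) ∧
  (∃ e : X ≃L[ℝ] X, (e : X →L[ℝ] X) = M) ∧ (∀ x : X, 0 ≤ ⟪M x - T x, x⟫)

set_option linter.unusedSectionVars false
/-! ### Subgradients and extended-real values -/

lemma ediff_ne_top {F : X → EReal} (hF : Proper F) {x ξ : X} (h : ξ ∈ ediff F x) : F x ≠ ⊤ := by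
  obtain ⟨z, hz⟩ := hF.2
  intro hx
  have h1 := h z
  rw [hx, EReal.top_add_coe] at h1
  exact hz (top_le_iff.mp h1)

lemma ediff_real {F : X → EReal} (hF : Proper F) {x ξ z : X} (h : ξ ∈ ediff F x)
    (hz : z ∈ edom F) : (F x).toReal + ⟪ξ, z - x⟫ ≤ (F z).toReal := by
  have h1 := h z
  rw [← EReal.coe_toReal (ediff_ne_top hF h) (hF.1 x), ← EReal.coe_toReal hz (hF.1 z)] at h1
  exact_mod_cast h1

lemma convexOn_toReal {F : X → EReal} (hF : Proper F) (hc : ConvexE F) :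
    ConvexOn ℝ (edom F) (fun x => (F x).toReal) := by
  have key : ∀ x ∈ edom F, ∀ z ∈ edom F, ∀ a b : ℝ, 0 ≤ a → 0 ≤ b → a + b = 1 →
      F (a • x + b • z) ≤ ((a * (F x).toReal + b * (F z).toReal : ℝ) : EReal) := by
    intro x hx z hz a b ha hb hab
    obtain rfl : b = 1 - a := by linarith
    have h := hc x z a ha (by linarith)
    rw [← EReal.coe_toReal hx (hF.1 x), ← EReal.coe_toReal hz (hF.1 z)] at h
    exact_mod_cast h
  constructor
  · intro x hx z hz a b ha hb hab
    exact ne_top_of_le_ne_top (EReal.coe_ne_top _) (key x hx z hz a b ha hb hab)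
  · intro x hx z hz a b ha hb hab
    have h := key x hx z hz a b ha hb hab
    have ht : F (a • x + b • z) ≠ ⊤ := ne_top_of_le_ne_top (EReal.coe_ne_top _) h
    rw [← EReal.coe_toReal ht (hF.1 _)] at h
    exact_mod_cast h

/-- Jensen's inequality for arithmetic means. -/
lemma jensen_mean {F : X → EReal} (hF : Proper F) (hc : ConvexE F) {p : ℕ → X}
    (hp : ∀ k, p k ∈ edom F) {k : ℕ} (hk : 1 ≤ k) :
    (k : ℝ)⁻¹ • ∑ j ∈ Finset.range k, p j ∈ edom F ∧
    (F ((k : ℝ)⁻¹ • ∑ j ∈ Finset.range k, p j)).toReal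
      ≤ (k : ℝ)⁻¹ * ∑ j ∈ Finset.range k, (F (p j)).toReal := by
  have hk0 : (k : ℝ) ≠ 0 := by positivity
  have h0 : ∀ j ∈ Finset.range k, (0 : ℝ) ≤ (k : ℝ)⁻¹ := fun _ _ => by positivity
  have h1 : ∑ j ∈ Finset.range k, (k : ℝ)⁻¹ = 1 := by simp [hk0]
  have hcv := convexOn_toReal hF hc
  rw [Finset.smul_sum, Finset.mul_sum]
  exact ⟨hcv.1.sum_mem h0 h1 (fun j _ => hp j), hcv.map_sum_le h0 h1 (fun j _ => hp j)⟩

/-! ### Weak limits along filters -/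

/-- Weak convergence along an arbitrary filter on the index set; used for ultrafilters below
`atTop`, which replace the extraction of weakly convergent subsequences. -/
def WeakLim (l : Filter ℕ) (u : ℕ → X) (z : X) : Prop :=
  ∀ w : X, Tendsto (fun k => ⟪u k, w⟫) l (nhds ⟪z, w⟫)

lemma WeakLim.add {l : Filter ℕ} {u v : ℕ → X} {a b : X} (hu : WeakLim l u a)
    (hv : WeakLim l v b) : WeakLim l (fun k => u k + v k) (a + b) := fun w => by
  simpa only [inner_add_left] using (hu w).add (hv w)

lemma WeakLim.sub {l : Filter ℕ} {u v : ℕ → X} {a b : X} (hu : WeakLim l u a)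
    (hv : WeakLim l v b) : WeakLim l (fun k => u k - v k) (a - b) := fun w => by
  simpa only [inner_sub_left] using (hu w).sub (hv w)

lemma WeakLim.map {l : Filter ℕ} {u : ℕ → X} {a : X} (A : X →L[ℝ] Y) (hu : WeakLim l u a) :
    WeakLim l (fun k => A (u k)) (A a) := fun w => by
  simpa only [ContinuousLinearMap.adjoint_inner_right] using
    hu ((ContinuousLinearMap.adjoint A) w)

lemma WeakLim.of_tendsto {l : Filter ℕ} {u : ℕ → X} {a : X} (hu : Tendsto u l (nhds a)) :
    WeakLim l u a := fun _ => hu.inner tendsto_const_nhds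

lemma WeakLim.unique {l : Filter ℕ} [l.NeBot] {u : ℕ → X} {a b : X} (ha : WeakLim l u a)
    (hb : WeakLim l u b) : a = b :=
  ext_inner_right ℝ fun w => tendsto_nhds_unique (ha w) (hb w)

/-- Weak compactness of bounded sets: the limit of the inner products along an ultrafilter is a
bounded linear functional, hence is represented by a vector. -/
lemma exists_weakLim (U : Ultrafilter ℕ) {u : ℕ → X} {C : ℝ} (hC : ∀ k, ‖u k‖ ≤ C) :
    ∃ z, WeakLim (U : Filter ℕ) u z := by
  have hb : ∀ w k, |⟪u k, w⟫| ≤ C * ‖w‖ := fun w k =>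
    (abs_real_inner_le_norm _ _).trans (mul_le_mul_of_nonneg_right (hC k) (norm_nonneg _))
  have hex : ∀ w : X, ∃ t : ℝ, t ∈ Set.Icc (-(C * ‖w‖)) (C * ‖w‖) ∧
      Tendsto (fun k => ⟪u k, w⟫) (U : Filter ℕ) (nhds t) := by
    intro w
    have h := (isCompact_Icc (a := -(C * ‖w‖)) (b := C * ‖w‖)).ultrafilter_le_nhds
      (U.map fun k => ⟪u k, w⟫) (by
        rw [Ultrafilter.coe_map, le_principal_iff]
        exact Filter.Eventually.of_forall (f := (U : Filter ℕ)) fun k => abs_le.mp (hb w k))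
    obtain ⟨t, ht, h⟩ := h
    exact ⟨t, ht, h⟩
  choose t ht hlim using hex
  let T : X →ₗ[ℝ] ℝ :=
    { toFun := t
      map_add' := fun a b => tendsto_nhds_unique (hlim (a + b)) (by
        simpa only [inner_add_right] using (hlim a).add (hlim b))
      map_smul' := fun c a => tendsto_nhds_unique (hlim (c • a)) (by
        simpa only [real_inner_smul_right, smul_eq_mul, RingHom.id_apply] using
          (hlim a).const_mul c) }
  let T' : X →L[ℝ] ℝ := T.mkContinuous C (fun w => abs_le.mpr (ht w))
  refine ⟨(InnerProductSpace.toDual ℝ X).symm T', fun w => ?_⟩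
  rw [InnerProductSpace.toDual_symm_apply]
  exact hlim w

/-- Weak lower semicontinuity of a convex lower semicontinuous functional: a closed convex sublevel
set missing the weak limit is strictly separated from it. -/
lemma weak_lsc {F : X → EReal} (hc : ConvexE F) (hl : LowerSemicontinuous F) {l : Filter ℕ}
    {u : ℕ → X} {a : X} (hu : WeakLim l u a) {c : ℝ} (h : (c : EReal) < F a) :
    ∀ᶠ k in l, (c : EReal) < F (u k) := by
  have hconv : Convex ℝ {x | F x ≤ (c : EReal)} := by
    intro x hx z hz s t hs ht hst
    obtain rfl : t = 1 - s := by linarith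
    refine (hc x z s hs (by linarith)).trans ?_
    have h1 : (s : EReal) * F x ≤ (s : EReal) * c :=
      mul_le_mul_of_nonneg_left hx (by exact_mod_cast hs)
    have h2 : ((1 - s : ℝ) : EReal) * F z ≤ ((1 - s : ℝ) : EReal) * c :=
      mul_le_mul_of_nonneg_left hz (by exact_mod_cast ht)
    refine (add_le_add h1 h2).trans (le_of_eq ?_)
    have h3 : s * c + (1 - s) * c = c := by ring
    exact_mod_cast congrArg (fun r : ℝ => (r : EReal)) h3
  have hclosed : IsClosed {x | F x ≤ (c : EReal)} := hl.isClosed_preimage _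
  obtain ⟨f, s, hfa, hfs⟩ := geometric_hahn_banach_point_closed hconv hclosed
    (x := a) (by simpa using h)
  have hf : ∀ x, f x = ⟪x, (InnerProductSpace.toDual ℝ X).symm f⟫ := fun x => by
    rw [real_inner_comm, InnerProductSpace.toDual_symm_apply]
  have hlim := hu ((InnerProductSpace.toDual ℝ X).symm f)
  rw [← hf] at hlim
  filter_upwards [hlim.eventually (gt_mem_nhds hfa)] with k hk
  rw [← hf] at hk
  by_contra hcon
  exact absurd (hfs _ (not_lt.mp hcon)) (not_lt.mpr hk.le)

/-! ### The Lyapunov function and its descent identity -/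

/-- The Lyapunov function: half the squared distance of the state `(a, e, b)` to the fixed point
`(x - σK*y, x, y + τKx)` attached to `(x, y)`, in the seminorm with weights `σ⁻¹`, `σ⁻¹D`, `τ⁻¹`. -/
def lyap (K : X →L[ℝ] Y) (σ τ : ℝ) (D : X →L[ℝ] X) (a e : X) (b : Y) (x : X) (y : Y) : ℝ :=
  ‖a - x + σ • (ContinuousLinearMap.adjoint K) y‖ ^ 2 / (2 * σ)
    + ⟪D (e - x), e - x⟫ / (2 * σ) + ‖b - y - τ • K x‖ ^ 2 / (2 * τ)

/-- The iteration rewritten as an implicit proximal point step for the states `(a, d, b)`, where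
`D` stands for `M - T`, and `p`, `q` for the proximal outputs. -/
structure Orbit (K : X →L[ℝ] Y) (σ τ : ℝ) (D : X →L[ℝ] X) (a d : ℕ → X) (b : ℕ → Y)
    (p : ℕ → X) (q : ℕ → Y) : Prop where
  hσ : 0 < σ
  hτ : 0 < τ
  symm : ∀ x y : X, ⟪D x, y⟫ = ⟪x, D y⟫
  pos : ∀ x : X, 0 ≤ ⟪D x, x⟫
  hp : ∀ k, p k = a k - a (k+1) + d (k+1)
  hq : ∀ k, q k = b (k+1) - τ • K (d (k+1))
  hd : ∀ k, D (d k - d (k+1)) =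
    a (k+1) + σ • (ContinuousLinearMap.adjoint K) (b (k+1))
      - (d (k+1) + (σ * τ) • (ContinuousLinearMap.adjoint K) (K (d (k+1))))
      - (a k - a (k+1)) - σ • (ContinuousLinearMap.adjoint K) (b k - b (k+1))

/-- The seminorm inner product of the last increment with the new state, measured from the fixed
point of `(x, y)`. -/
def cross (K : X →L[ℝ] Y) (σ τ : ℝ) (D : X →L[ℝ] X) (a d : ℕ → X) (b : ℕ → Y)
    (x : X) (y : Y) (k : ℕ) : ℝ :=
  ⟪a k - a (k+1), a (k+1) - x + σ • (ContinuousLinearMap.adjoint K) y⟫ / σ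
    + ⟪D (d k - d (k+1)), d (k+1) - x⟫ / σ
    + ⟪b k - b (k+1), b (k+1) - y - τ • K x⟫ / τ

/-- Half the squared seminorm of the last increment. -/
def incr (σ τ : ℝ) (D : X →L[ℝ] X) (a d : ℕ → X) (b : ℕ → Y) (k : ℕ) : ℝ :=
  ‖a k - a (k+1)‖ ^ 2 / (2 * σ) + ⟪D (d k - d (k+1)), d k - d (k+1)⟫ / (2 * σ)
    + ‖b k - b (k+1)‖ ^ 2 / (2 * τ)

section orbit

variable {K : X →L[ℝ] Y} {σ τ : ℝ} {D : X →L[ℝ] X} {a d : ℕ → X} {b : ℕ → Y}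
  {p : ℕ → X} {q : ℕ → Y}

/-- The proximal inequalities of one step, added to the bilinear coupling, combine to exactly the
cross term. -/
lemma Orbit.cross_eq (h : Orbit K σ τ D a d b p q) (x : X) (y : Y) (k : ℕ) :
    cross K σ τ D a d b x y k = ⟪K (p k), y⟫ - ⟪K x, q k⟫
      + ⟪σ⁻¹ • (a k - p k), p k - x⟫ + ⟪τ⁻¹ • (b k - q k), q k - y⟫ := by
  have hσ := h.hσ.ne'
  have hτ := h.hτ.ne'
  unfold cross
  rw [h.hd k, h.hp k, h.hq k]
  generalize a k = a0, a (k+1) = a1, b k = b0, b (k+1) = b1, d (k+1) = d1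
  simp only [inner_add_left, inner_sub_left, inner_add_right, inner_sub_right, map_add, map_sub,
    real_inner_smul_left, real_inner_smul_right, smul_add, smul_sub,
    ContinuousLinearMap.adjoint_inner_left, ContinuousLinearMap.adjoint_inner_right]
  simp only [real_inner_comm]
  field_simp
  ring

lemma Orbit.cross_eq_sub (h : Orbit K σ τ D a d b p q) (x : X) (y : Y) (k : ℕ) :
    cross K σ τ D a d b x y k = lyap K σ τ D (a k) (d k) (b k) x y
      - lyap K σ τ D (a (k+1)) (d (k+1)) (b (k+1)) x y - incr σ τ D a d b k := by
  have h2 : ∀ r s : X, ⟪D (r + s), r + s⟫ = ⟪D r, r⟫ + 2 * ⟪D r, s⟫ + ⟪D s, s⟫ := by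
    intro r s
    have : ⟪D s, r⟫ = ⟪D r, s⟫ := by rw [h.symm, real_inner_comm]
    simp only [map_add, inner_add_left, inner_add_right, this]; ring
  unfold lyap cross incr
  have e1 : a k - x + σ • (ContinuousLinearMap.adjoint K) y = (a k - a (k+1)) +
    (a (k+1) - x + σ • (ContinuousLinearMap.adjoint K) y) := by abel
  have e2 : b k - y - τ • K x = (b k - b (k+1)) + (b (k+1) - y - τ • K x) := by abel
  have e3 : d k - x = (d k - d (k+1)) + (d (k+1) - x) := by abel
  rw [e1, e2, e3, norm_add_sq_real (a k - a (k+1)),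
    norm_add_sq_real (b k - b (k+1)), h2]
  have hσ := h.hσ.ne'
  have hτ := h.hτ.ne'
  field_simp
  ring

lemma Orbit.lyap_nonneg (h : Orbit K σ τ D a d b p q) (x : X) (y : Y) (k : ℕ) :
    0 ≤ lyap K σ τ D (a k) (d k) (b k) x y := by
  have := h.hσ
  have := h.hτ
  have := h.pos (d k - x)
  unfold lyap
  positivity

lemma Orbit.incr_nonneg (h : Orbit K σ τ D a d b p q) (k : ℕ) :
    0 ≤ incr σ τ D a d b k := by
  have := h.hσ
  have := h.hτ
  have := h.pos (d k - d (k+1))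
  unfold incr
  positivity

/-! ### Consequences of descent -/

lemma Orbit.antitone_lyap (h : Orbit K σ τ D a d b p q) {x : X} {y : Y}
    (hc : ∀ k, 0 ≤ cross K σ τ D a d b x y k) :
    Antitone fun k => lyap K σ τ D (a k) (d k) (b k) x y := by
  refine antitone_nat_of_succ_le fun k => ?_
  have h1 := h.cross_eq_sub x y k
  have h2 := hc k
  have h3 := h.incr_nonneg k
  linarith

lemma Orbit.tendsto_lyap (h : Orbit K σ τ D a d b p q) {x : X} {y : Y}
    (hc : ∀ k, 0 ≤ cross K σ τ D a d b x y k) :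
    ∃ t, Tendsto (fun k => lyap K σ τ D (a k) (d k) (b k) x y) atTop (nhds t) :=
  ⟨_, tendsto_atTop_ciInf (h.antitone_lyap hc)
    ⟨0, by rintro _ ⟨k, rfl⟩; exact h.lyap_nonneg x y k⟩⟩

lemma Orbit.tendsto_incr (h : Orbit K σ τ D a d b p q) {x : X} {y : Y}
    (hc : ∀ k, 0 ≤ cross K σ τ D a d b x y k) :
    Tendsto (incr σ τ D a d b) atTop (nhds 0) := by
  obtain ⟨t, ht⟩ := h.tendsto_lyap hc
  have h1 := ht.sub (ht.comp (tendsto_add_atTop_nat 1))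
  rw [sub_self] at h1
  refine squeeze_zero h.incr_nonneg (fun k => ?_) h1
  have h2 := h.cross_eq_sub x y k
  have h3 := hc k
  simp only [Function.comp]
  linarith

lemma tendsto_zero_of_sq_le {Z : Type*} [NormedAddCommGroup Z] {s : ℕ → Z} {t : ℕ → ℝ} {c : ℝ}
    (hs : ∀ k, ‖s k‖ ^ 2 ≤ c * t k) (ht : Tendsto t atTop (nhds 0)) :
    Tendsto s atTop (nhds 0) := by
  have h1 : Tendsto (fun k => c * t k) atTop (nhds 0) := by simpa using ht.const_mul c
  have h2 := squeeze_zero (fun k => sq_nonneg ‖s k‖) hs h1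
  have h3 := (Real.continuous_sqrt.tendsto 0).comp h2
  simp only [Real.sqrt_zero] at h3
  rw [tendsto_zero_iff_norm_tendsto_zero]
  exact h3.congr fun k => Real.sqrt_sq (norm_nonneg _)

/-- A positive semidefinite form controls the norm of the operator's values:
`‖De‖² ≤ (‖D‖ + 1)⟪De, e⟫`. -/
lemma norm_sq_le_of_pos (D : X →L[ℝ] X) (hs : ∀ x y : X, ⟪D x, y⟫ = ⟪x, D y⟫)
    (hp : ∀ x : X, 0 ≤ ⟪D x, x⟫) (e : X) : ‖D e‖ ^ 2 ≤ (‖D‖ + 1) * ⟪D e, e⟫ := by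
  set c := ‖D‖ + 1 with hc
  have hc0 : 0 < c := by positivity
  -- positivity of the form at `c • e - D e`
  have h1 := hp (c • e - D e)
  have h2 : ⟪D (D e), D e⟫ ≤ ‖D‖ * ‖D e‖ ^ 2 := by
    refine (real_inner_le_norm _ _).trans ?_
    have := D.le_opNorm (D e)
    nlinarith [norm_nonneg (D e)]
  have h3 : ⟪D (c • e - D e), c • e - D e⟫
      = c ^ 2 * ⟪D e, e⟫ - 2 * c * ‖D e‖ ^ 2 + ⟪D (D e), D e⟫ := by
    have : ⟪D (D e), e⟫ = ‖D e‖ ^ 2 := by rw [hs, real_inner_self_eq_norm_sq]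
    simp only [map_sub, map_smul, inner_sub_left, inner_sub_right, real_inner_smul_left,
      real_inner_smul_right, this, real_inner_self_eq_norm_sq]
    ring
  rw [h3] at h1
  have h4 : 0 ≤ c * (c * ⟪D e, e⟫ - ‖D e‖ ^ 2) := by nlinarith [sq_nonneg ‖D e‖]
  have := nonneg_of_mul_nonneg_right h4 hc0
  linarith

lemma Orbit.tendsto_increments (h : Orbit K σ τ D a d b p q) {x : X} {y : Y}
    (hc : ∀ k, 0 ≤ cross K σ τ D a d b x y k) :
    Tendsto (fun k => a k - a (k+1)) atTop (nhds 0) ∧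
    Tendsto (fun k => b k - b (k+1)) atTop (nhds 0) ∧
    Tendsto (fun k => D (d k - d (k+1))) atTop (nhds 0) := by
  have hσ := h.hσ
  have hτ := h.hτ
  have hi := h.tendsto_incr hc
  have hd := fun k => h.pos (d k - d (k+1))
  refine ⟨tendsto_zero_of_sq_le (c := 2 * σ) (fun k => ?_) hi,
    tendsto_zero_of_sq_le (c := 2 * τ) (fun k => ?_) hi,
    tendsto_zero_of_sq_le (c := (‖D‖ + 1) * (2 * σ)) (fun k => ?_) hi⟩
  · have h1 : ‖a k - a (k+1)‖ ^ 2 / (2 * σ) ≤ incr σ τ D a d b k := by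
      have := hd k
      unfold incr
      rw [add_assoc]
      exact le_add_of_nonneg_right (by positivity)
    rw [div_le_iff₀ (by positivity)] at h1
    linarith
  · have h1 : ‖b k - b (k+1)‖ ^ 2 / (2 * τ) ≤ incr σ τ D a d b k := by
      have := hd k
      unfold incr
      exact le_add_of_nonneg_left (by positivity)
    rw [div_le_iff₀ (by positivity)] at h1
    linarith
  · have h1 : ⟪D (d k - d (k+1)), d k - d (k+1)⟫ / (2 * σ) ≤ incr σ τ D a d b k := by
      unfold incr
      rw [add_right_comm]
      exact le_add_of_nonneg_left (by positivity)
    rw [div_le_iff₀ (by positivity)] at h1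
    refine (norm_sq_le_of_pos D h.symm h.pos _).trans ?_
    rw [mul_assoc]
    refine mul_le_mul_of_nonneg_left ?_ (by positivity)
    linarith

lemma bounded_of_sq_le {Z : Type*} [NormedAddCommGroup Z] {s : ℕ → Z} {z : Z} {c : ℝ}
    (hs : ∀ k, ‖s k - z‖ ^ 2 ≤ c) : ∃ C, ∀ k, ‖s k‖ ≤ C := by
  refine ⟨√c + ‖z‖, fun k => ?_⟩
  have h1 := Real.le_sqrt_of_sq_le (hs k)
  have h2 := norm_sub_norm_le (s k) z
  linarith

lemma Orbit.bounded (h : Orbit K σ τ D a d b p q) {x : X} {y : Y}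
    (hc : ∀ k, 0 ≤ cross K σ τ D a d b x y k) :
    (∃ C, ∀ k, ‖a k‖ ≤ C) ∧ ∃ C, ∀ k, ‖b k‖ ≤ C := by
  have hσ := h.hσ
  have hτ := h.hτ
  have hl := fun k => h.antitone_lyap hc (Nat.zero_le k)
  have hd := fun k => h.pos (d k - x)
  set L := lyap K σ τ D (a 0) (d 0) (b 0) x y
  constructor
  · refine bounded_of_sq_le (z := x - σ • (ContinuousLinearMap.adjoint K) y) (c := L * (2 * σ))
      fun k => ?_
    rw [← div_le_iff₀ (by positivity), ← sub_add]
    refine le_trans ?_ (hl k)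
    have := hd k
    simp only [lyap]
    rw [add_assoc]
    exact le_add_of_nonneg_right (by positivity)
  · refine bounded_of_sq_le (z := y + τ • K x) (c := L * (2 * τ)) fun k => ?_
    rw [← div_le_iff₀ (by positivity), ← sub_sub]
    refine le_trans ?_ (hl k)
    have := hd k
    unfold lyap
    exact le_add_of_nonneg_left (by positivity)

/-- Coercivity of `T = I + στK*K`. -/
lemma norm_le_norm_T (hσ : 0 < σ) (hτ : 0 < τ) (x : X) :
    ‖x‖ ≤ ‖x + (σ * τ) • (ContinuousLinearMap.adjoint K) (K x)‖ := by
  set t := x + (σ * τ) • (ContinuousLinearMap.adjoint K) (K x) with ht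
  have h1 : ‖x‖ ^ 2 ≤ ⟪t, x⟫ := by
    rw [ht, inner_add_left, real_inner_smul_left, ContinuousLinearMap.adjoint_inner_left,
      real_inner_self_eq_norm_sq, real_inner_self_eq_norm_sq]
    exact le_add_of_nonneg_right (by positivity)
  have h2 := real_inner_le_norm t x
  by_contra hcon
  push Not at hcon
  have h3 : 0 < ‖x‖ := (norm_nonneg t).trans_lt hcon
  nlinarith

/-- The residual of the linear equation `T d = a + σK*b` vanishes along the iteration. -/
lemma Orbit.tendsto_residual (h : Orbit K σ τ D a d b p q) {x : X} {y : Y}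
    (hc : ∀ k, 0 ≤ cross K σ τ D a d b x y k) :
    Tendsto (fun k => a (k+1) + σ • (ContinuousLinearMap.adjoint K) (b (k+1))
      - (d (k+1) + (σ * τ) • (ContinuousLinearMap.adjoint K) (K (d (k+1)))))
      atTop (nhds 0) := by
  obtain ⟨ha, hb, hd⟩ := h.tendsto_increments hc
  have h1 := (hd.add ha).add
    ((((ContinuousLinearMap.adjoint K).continuous.tendsto 0).comp hb).const_smul σ)
  simp only [map_zero, smul_zero, add_zero] at h1
  refine h1.congr fun k => ?_
  simp only [Function.comp, h.hd k]
  abel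

lemma Orbit.bounded_d (h : Orbit K σ τ D a d b p q) {x : X} {y : Y}
    (hc : ∀ k, 0 ≤ cross K σ τ D a d b x y k) : ∃ C, ∀ k, ‖d (k+1)‖ ≤ C := by
  obtain ⟨⟨A, hA⟩, B, hB⟩ := h.bounded hc
  have hr := h.tendsto_residual hc
  obtain ⟨R, hR⟩ := (Metric.isBounded_range_of_tendsto _ hr).exists_norm_le
  refine ⟨A + ‖σ • ContinuousLinearMap.adjoint K‖ * B + R, fun k => ?_⟩
  refine (norm_le_norm_T (K := K) h.hσ h.hτ (d (k+1))).trans ?_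
  have h1 := hR _ ⟨k, rfl⟩
  have h2 := hA (k+1)
  have h3 : ‖σ • (ContinuousLinearMap.adjoint K) (b (k+1))‖
      ≤ ‖σ • ContinuousLinearMap.adjoint K‖ * B :=
    ((σ • ContinuousLinearMap.adjoint K).le_opNorm (b (k+1))).trans
      (mul_le_mul_of_nonneg_left (hB _) (norm_nonneg _))
  have h4 := norm_sub_norm_le (d (k+1) + (σ * τ) • (ContinuousLinearMap.adjoint K) (K (d (k+1))))
    (a (k+1) + σ • (ContinuousLinearMap.adjoint K) (b (k+1)))
  rw [norm_sub_rev] at h4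
  have h5 := norm_add_le (a (k+1)) (σ • (ContinuousLinearMap.adjoint K) (b (k+1)))
  simp only at h1
  linarith

lemma tendsto_inner_zero {Z : Type*} [NormedAddCommGroup Z] [InnerProductSpace ℝ Z]
    {s t : ℕ → Z} {C : ℝ} (hs : Tendsto s atTop (nhds 0)) (ht : ∀ k, ‖t k‖ ≤ C) :
    Tendsto (fun k => ⟪s k, t k⟫) atTop (nhds 0) := by
  have h1 : Tendsto (fun k => ‖s k‖ * C) atTop (nhds 0) := by
    simpa using (tendsto_zero_iff_norm_tendsto_zero.mp hs).mul_const C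
  refine squeeze_zero_norm (fun k => ?_) h1
  exact (norm_inner_le_norm _ _).trans (mul_le_mul_of_nonneg_left (ht k) (norm_nonneg _))

/-- Descent at one point `(x, y)` forces the cross terms at every point to vanish: increments tend
to zero and states stay bounded. -/
lemma Orbit.tendsto_cross (h : Orbit K σ τ D a d b p q) {x : X} {y : Y}
    (hc : ∀ k, 0 ≤ cross K σ τ D a d b x y k) (x' : X) (y' : Y) :
    Tendsto (cross K σ τ D a d b x' y') atTop (nhds 0) := by
  obtain ⟨⟨A, hA⟩, B, hB⟩ := h.bounded hc
  obtain ⟨E, hE⟩ := h.bounded_d hc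
  obtain ⟨ha, hb, hd⟩ := h.tendsto_increments hc
  have h1 := tendsto_inner_zero ha (t := fun k => a (k+1) - x' +
      σ • (ContinuousLinearMap.adjoint K) y')
    (C := A + ‖x'‖ + ‖σ • (ContinuousLinearMap.adjoint K) y'‖) (fun k => by
      have := norm_add_le (a (k+1) - x') (σ • (ContinuousLinearMap.adjoint K) y')
      have := norm_sub_le (a (k+1)) x'
      have := hA (k+1)
      linarith)
  have h2 := tendsto_inner_zero hd (t := fun k => d (k+1) - x')
    (C := E + ‖x'‖) (fun k => by
      have := norm_sub_le (d (k+1)) x'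
      have := hE k
      linarith)
  have h3 := tendsto_inner_zero hb (t := fun k => b (k+1) - y' - τ • K x')
    (C := B + ‖y'‖ + ‖τ • K x'‖) (fun k => by
      have := norm_sub_le (b (k+1) - y') (τ • K x')
      have := norm_sub_le (b (k+1)) y'
      have := hB (k+1)
      linarith)
  have h4 := ((h1.div_const σ).add (h2.div_const σ)).add (h3.div_const τ)
  simp only [zero_div, add_zero] at h4
  exact h4

/-! ### Weak cluster points -/

/-- The weak limits `x`, `y` of the iterates along a filter, together with the weak limits of the
states, which form the fixed point attached to `(x, y)`. -/
structure Cluster (K : X →L[ℝ] Y) (σ τ : ℝ) (a d : ℕ → X) (b : ℕ → Y) (p : ℕ → X) (q : ℕ → Y)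
    (l : Filter ℕ) (x : X) (y : Y) : Prop where
  ha : WeakLim l (fun k => a (k+1)) (x - σ • (ContinuousLinearMap.adjoint K) y)
  hb : WeakLim l (fun k => b (k+1)) (y + τ • K x)
  hd : WeakLim l (fun k => d (k+1)) x
  hp : WeakLim l p x
  hq : WeakLim l q y

lemma Orbit.exists_cluster (h : Orbit K σ τ D a d b p q) {x : X} {y : Y}
    (hc : ∀ k, 0 ≤ cross K σ τ D a d b x y k) (U : Ultrafilter ℕ)
    (hU : (U : Filter ℕ) ≤ atTop) :
    ∃ xs ys, Cluster K σ τ a d b p q U xs ys := by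
  obtain ⟨⟨A, hA⟩, B, hB⟩ := h.bounded hc
  obtain ⟨E, hE⟩ := h.bounded_d hc
  obtain ⟨a', ha'⟩ := exists_weakLim U (u := fun k => a (k+1)) (fun k => hA (k+1))
  obtain ⟨b', hb'⟩ := exists_weakLim U (u := fun k => b (k+1)) (fun k => hB (k+1))
  obtain ⟨x', hx'⟩ := exists_weakLim U hE
  obtain ⟨ha, -, -⟩ := h.tendsto_increments hc
  have hr := (WeakLim.of_tendsto ((h.tendsto_residual hc).mono_left hU))
  have hr' := (ha'.add (hb'.map (σ • ContinuousLinearMap.adjoint K))).sub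
    (hx'.add (hx'.map ((σ * τ) • (ContinuousLinearMap.adjoint K).comp K)))
  have heq := hr'.unique hr
  simp only [smul_apply, ContinuousLinearMap.comp_apply] at heq
  have ha'' : a' = x' - σ • (ContinuousLinearMap.adjoint K) (b' - τ • K x') := by
    rw [map_sub, map_smul, smul_sub, smul_smul, ← sub_eq_zero, ← heq]
    abel
  refine ⟨x', b' - τ • K x', ?_, ?_, hx', ?_, ?_⟩
  · rwa [← ha'']
  · rwa [sub_add_cancel]
  · have h1 := (WeakLim.of_tendsto (ha.mono_left hU)).add hx'
    rw [zero_add] at h1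
    rwa [funext h.hp]
  · have h1 := hb'.sub (hx'.map (τ • K))
    rw [funext h.hq]
    exact h1

/-- Opial's argument: if the Lyapunov functions at two cluster points both converge, their
difference, affine in the state, has the same limit along both filters, so the two attached fixed
points are at distance zero. -/
lemma Orbit.cluster_unique (h : Orbit K σ τ D a d b p q) {l₁ l₂ : Filter ℕ} [l₁.NeBot] [l₂.NeBot]
    (hl₁ : l₁ ≤ atTop) (hl₂ : l₂ ≤ atTop) {x₁ x₂ : X} {y₁ y₂ : Y}
    (h₁ : Cluster K σ τ a d b p q l₁ x₁ y₁) (h₂ : Cluster K σ τ a d b p q l₂ x₂ y₂)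
    (hc₁ : ∀ k, 0 ≤ cross K σ τ D a d b x₁ y₁ k) (hc₂ : ∀ k, 0 ≤ cross K σ τ D a d b x₂ y₂ k) :
    x₁ = x₂ ∧ y₁ = y₂ := by
  have hσ := h.hσ
  have hτ := h.hτ
  obtain ⟨t₁, ht₁⟩ := h.tendsto_lyap hc₁
  obtain ⟨t₂, ht₂⟩ := h.tendsto_lyap hc₂
  set A₁ := x₁ - σ • (ContinuousLinearMap.adjoint K) y₁ with hA₁
  set A₂ := x₂ - σ • (ContinuousLinearMap.adjoint K) y₂ with hA₂
  set B₁ := y₁ + τ • K x₁ with hB₁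
  set B₂ := y₂ + τ • K x₂ with hB₂
  let S : X → X → Y → ℝ := fun α ε β =>
    ⟪α, A₁ - A₂⟫ / σ + ⟪ε, D (x₁ - x₂)⟫ / σ + ⟪β, B₁ - B₂⟫ / τ
  have hlim : ∀ l : Filter ℕ, ∀ x y, Cluster K σ τ a d b p q l x y →
      Tendsto (fun k => S (a (k+1)) (d (k+1)) (b (k+1))) l
        (nhds (S (x - σ • (ContinuousLinearMap.adjoint K) y) x (y + τ • K x))) :=
    fun l x y hl => (((hl.ha _).div_const σ).add ((hl.hd _).div_const σ)).add
      ((hl.hb _).div_const τ)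
  have hdiff : ∀ k, S (a k) (d k) (b k) =
      (‖A₁‖ ^ 2 / (2 * σ) + ⟪D x₁, x₁⟫ / (2 * σ) + ‖B₁‖ ^ 2 / (2 * τ))
      - (‖A₂‖ ^ 2 / (2 * σ) + ⟪D x₂, x₂⟫ / (2 * σ) + ‖B₂‖ ^ 2 / (2 * τ))
      - (lyap K σ τ D (a k) (d k) (b k) x₁ y₁ - lyap K σ τ D (a k) (d k) (b k) x₂ y₂) := by
    intro k
    have hD : ∀ z, ⟪D (d k - z), d k - z⟫ = ⟪D (d k), d k⟫ - 2 * ⟪d k, D z⟫ + ⟪D z, z⟫ := by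
      intro z
      have e1 : ⟪D (d k), z⟫ = ⟪d k, D z⟫ := h.symm _ _
      have e2 : ⟪D z, d k⟫ = ⟪d k, D z⟫ := real_inner_comm _ _
      simp only [map_sub, inner_sub_left, inner_sub_right, e1, e2]
      ring
    unfold lyap
    simp only [S]
    rw [sub_add (a k) x₁, sub_add (a k) x₂, ← hA₁, ← hA₂,
      sub_sub (b k) y₁, sub_sub (b k) y₂, ← hB₁, ← hB₂, hD, hD, norm_sub_sq_real (a k),
      norm_sub_sq_real (a k), norm_sub_sq_real (b k), norm_sub_sq_real (b k), map_sub,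
      inner_sub_right (a k), inner_sub_right (d k), inner_sub_right (b k)]
    field_simp
    ring
  have hS := (tendsto_add_atTop_iff_nat 1).mpr
    (((ht₁.sub ht₂).const_sub _).congr fun k => (hdiff k).symm)
  have e1 := tendsto_nhds_unique (hlim l₁ _ _ h₁) (hS.mono_left hl₁)
  have e2 := tendsto_nhds_unique (hlim l₂ _ _ h₂) (hS.mono_left hl₂)
  have e3 : ‖A₁ - A₂‖ ^ 2 / σ + ⟪D (x₁ - x₂), x₁ - x₂⟫ / σ + ‖B₁ - B₂‖ ^ 2 / τ = 0 := by
    have e4 := sub_eq_zero.mpr (e1.trans e2.symm)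
    simp only [S, ← hA₁, ← hA₂, ← hB₁, ← hB₂] at e4
    rw [← real_inner_self_eq_norm_sq, ← real_inner_self_eq_norm_sq, h.symm,
      inner_sub_left A₁ A₂, inner_sub_left x₁ x₂, inner_sub_left B₁ B₂, ← e4]
    ring
  have hpos := h.pos (x₁ - x₂)
  have p1 : 0 ≤ ‖A₁ - A₂‖ ^ 2 / σ := by positivity
  have p2 : 0 ≤ ⟪D (x₁ - x₂), x₁ - x₂⟫ / σ := by positivity
  have p3 : 0 ≤ ‖B₁ - B₂‖ ^ 2 / τ := by positivity
  have q1 : ‖A₁ - A₂‖ ^ 2 / σ = 0 := by linarith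
  have q3 : ‖B₁ - B₂‖ ^ 2 / τ = 0 := by linarith
  have hA : A₁ - A₂ = 0 := by simpa [hσ.ne'] using q1
  have hB : B₁ - B₂ = 0 := by simpa [hτ.ne'] using q3
  have hx : x₁ = x₂ := by
    -- `A + σK*B = Tx`, and `T` is injective
    have h5 := norm_le_norm_T (K := K) hσ hτ (x₁ - x₂)
    have h6 : (x₁ - x₂) + (σ * τ) • (ContinuousLinearMap.adjoint K) (K (x₁ - x₂))
        = (A₁ - A₂) + σ • (ContinuousLinearMap.adjoint K) (B₁ - B₂) := by
      simp only [hA₁, hA₂, hB₁, hB₂, map_sub, map_add, map_smul, smul_sub, smul_add, smul_smul]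
      abel
    rw [h6, hA, hB, map_zero, smul_zero, add_zero, norm_zero] at h5
    exact sub_eq_zero.mp (norm_le_zero_iff.mp h5)
  refine ⟨hx, ?_⟩
  have := sub_eq_zero.mp hB
  rw [hB₁, hB₂, hx] at this
  exact add_right_cancel this

end orbit

/-! ### Saddle points and the primal-dual gap -/

/-- The gap integrand `L(p, y) - L(x, q)`; it is meaningful when all the functional values involved
are finite. -/
def gapTerm (K : X →L[ℝ] Y) (F : X → EReal) (G : Y → EReal) (x : X) (y : Y) (p : X) (q : Y) : ℝ :=
  ⟪K p, y⟫ - ⟪K x, q⟫ + ((F p).toReal - (F x).toReal) + ((G q).toReal - (G y).toReal)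

lemma gapTerm_nonneg {K : X →L[ℝ] Y} {F : X → EReal} {G : Y → EReal} (hF : Proper F)
    (hG : Proper G) {xs : X} {ys : Y} (h : IsSaddle K F G xs ys) {p : X} {q : Y}
    (hp : p ∈ edom F) (hq : q ∈ edom G) : 0 ≤ gapTerm K F G xs ys p q := by
  obtain ⟨-, -, h1, h2⟩ := h
  have h3 := ediff_real hF h1 hp
  have h4 := ediff_real hG h2 hq
  simp only [inner_neg_left, inner_sub_right, ContinuousLinearMap.adjoint_inner_left] at h3 h4
  rw [real_inner_comm (K p), real_inner_comm (K xs)] at h3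
  unfold gapTerm
  linarith

lemma Orbit.gapTerm_le_cross {K : X →L[ℝ] Y} {σ τ : ℝ} {D : X →L[ℝ] X} {a d : ℕ → X} {b : ℕ → Y}
    {p : ℕ → X} {q : ℕ → Y} (h : Orbit K σ τ D a d b p q) {F : X → EReal} {G : Y → EReal}
    (hF : Proper F) (hG : Proper G) {k : ℕ} (hp : σ⁻¹ • (a k - p k) ∈ ediff F (p k))
    (hq : τ⁻¹ • (b k - q k) ∈ ediff G (q k)) {x : X} {y : Y} (hx : x ∈ edom F) (hy : y ∈ edom G) :
    gapTerm K F G x y (p k) (q k) ≤ cross K σ τ D a d b x y k := by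
  have h1 := ediff_real hF hp hx
  have h2 := ediff_real hG hq hy
  rw [h.cross_eq]
  rw [← neg_sub (p k) x, inner_neg_right] at h1
  rw [← neg_sub (q k) y, inner_neg_right] at h2
  unfold gapTerm
  linarith

/-- A weak limit of points whose gap integrands are asymptotically nonpositive is a saddle point. -/
lemma isSaddle_of_weakLim {K : X →L[ℝ] Y} {F : X → EReal} {G : Y → EReal}
    (hFp : Proper F) (hFc : ConvexE F) (hFl : LowerSemicontinuous F)
    (hGp : Proper G) (hGc : ConvexE G) (hGl : LowerSemicontinuous G)
    {l : Filter ℕ} [l.NeBot] {p : ℕ → X} {q : ℕ → Y} {xs : X} {ys : Y}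
    (hp : WeakLim l p xs) (hq : WeakLim l q ys)
    (hpF : ∀ k, p k ∈ edom F) (hqG : ∀ k, q k ∈ edom G) (c : X → Y → ℕ → ℝ)
    (hc : ∀ x y, Tendsto (c x y) l (nhds 0))
    (hle : ∀ x ∈ edom F, ∀ y ∈ edom G, ∀ k, gapTerm K F G x y (p k) (q k) ≤ c x y k) :
    IsSaddle K F G xs ys := by
  have key : ∀ x ∈ edom F, ∀ y ∈ edom G,
      F xs + G ys ≤ (((F x).toReal + (G y).toReal + ⟪K x, ys⟫ - ⟪K xs, y⟫ : ℝ) : EReal) := by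
    intro x hx y hy
    refine EReal.add_le_of_forall_lt fun α hα β hβ => ?_
    induction α with
    | bot => simp
    | top => exact absurd hα not_top_lt
    | coe α =>
      induction β with
      | bot => simp
      | top => exact absurd hβ not_top_lt
      | coe β =>
        have h1 : Tendsto (fun k => (F x).toReal + (G y).toReal + ⟪K x, q k⟫ - ⟪K (p k), y⟫
            + c x y k) l (nhds ((F x).toReal + (G y).toReal + ⟪K x, ys⟫ - ⟪K xs, y⟫ + 0)) := by
          have h2 := hq (K x)
          simp only [real_inner_comm (K x)] at h2
          exact ((h2.const_add _).sub ((hp.map K) y)).add (hc x y)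
        rw [add_zero] at h1
        rw [← EReal.coe_add, EReal.coe_le_coe_iff]
        refine ge_of_tendsto h1 ?_
        filter_upwards [weak_lsc hFc hFl hp hα, weak_lsc hGc hGl hq hβ] with k h3 h4
        have h5 := hle x hx y hy k
        rw [← EReal.coe_toReal (hpF k) (hFp.1 _), EReal.coe_lt_coe_iff] at h3
        rw [← EReal.coe_toReal (hqG k) (hGp.1 _), EReal.coe_lt_coe_iff] at h4
        unfold gapTerm at h5
        linarith
  obtain ⟨x0, hx0⟩ := hFp.2
  obtain ⟨y0, hy0⟩ := hGp.2
  have hxs : xs ∈ edom F := by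
    intro h
    have h1 := key x0 hx0 y0 hy0
    rw [h, EReal.top_add_of_ne_bot (hGp.1 _)] at h1
    exact EReal.coe_ne_top _ (top_le_iff.mp h1)
  have hys : ys ∈ edom G := by
    intro h
    have h1 := key x0 hx0 y0 hy0
    rw [h, EReal.add_top_of_ne_bot (hFp.1 _)] at h1
    exact EReal.coe_ne_top _ (top_le_iff.mp h1)
  have keyr : ∀ x ∈ edom F, ∀ y ∈ edom G, (F xs).toReal + (G ys).toReal
      ≤ (F x).toReal + (G y).toReal + ⟪K x, ys⟫ - ⟪K xs, y⟫ := by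
    intro x hx y hy
    have h1 := key x hx y hy
    rw [← EReal.coe_toReal hxs (hFp.1 _), ← EReal.coe_toReal hys (hGp.1 _)] at h1
    exact_mod_cast h1
  refine ⟨hxs, hys, fun z => ?_, fun z => ?_⟩
  · by_cases hz : F z = ⊤
    · rw [hz]; exact le_top
    · have h1 := keyr z hz ys hys
      rw [← EReal.coe_toReal hxs (hFp.1 _), ← EReal.coe_toReal hz (hFp.1 _), ← EReal.coe_add,
        EReal.coe_le_coe_iff, inner_neg_left, inner_sub_right,
        ContinuousLinearMap.adjoint_inner_left, ContinuousLinearMap.adjoint_inner_left,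
        real_inner_comm (K z), real_inner_comm (K xs)]
      linarith
  · by_cases hz : G z = ⊤
    · rw [hz]; exact le_top
    · have h1 := keyr xs hxs z hz
      rw [← EReal.coe_toReal hys (hGp.1 _), ← EReal.coe_toReal hz (hGp.1 _), ← EReal.coe_add,
        EReal.coe_le_coe_iff, inner_sub_right]
      linarith

/-- The gap integrand at arithmetic means is at most the mean of the integrands. -/
lemma gapTerm_mean_le {K : X →L[ℝ] Y} {F : X → EReal} {G : Y → EReal}
    (hFp : Proper F) (hFc : ConvexE F) (hGp : Proper G) (hGc : ConvexE G)
    {p : ℕ → X} {q : ℕ → Y} (hp : ∀ k, p k ∈ edom F) (hq : ∀ k, q k ∈ edom G) (x : X) (y : Y)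
    {k : ℕ} (hk : 1 ≤ k) :
    gapTerm K F G x y ((k : ℝ)⁻¹ • ∑ j ∈ Finset.range k, p j)
        ((k : ℝ)⁻¹ • ∑ j ∈ Finset.range k, q j)
      ≤ (k : ℝ)⁻¹ * ∑ j ∈ Finset.range k, gapTerm K F G x y (p j) (q j) := by
  have hk0 : (k : ℝ) ≠ 0 := by positivity
  have h1 := (jensen_mean hFp hFc hp hk).2
  have h2 := (jensen_mean hGp hGc hq hk).2
  have h3 : (k : ℝ)⁻¹ * ∑ j ∈ Finset.range k, gapTerm K F G x y (p j) (q j) =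
      (k : ℝ)⁻¹ * ∑ j ∈ Finset.range k, ⟪K (p j), y⟫
      - (k : ℝ)⁻¹ * ∑ j ∈ Finset.range k, ⟪K x, q j⟫
      + ((k : ℝ)⁻¹ * ∑ j ∈ Finset.range k, (F (p j)).toReal - (F x).toReal)
      + ((k : ℝ)⁻¹ * ∑ j ∈ Finset.range k, (G (q j)).toReal - (G y).toReal) := by
    simp only [gapTerm, Finset.sum_add_distrib, Finset.sum_sub_distrib, Finset.sum_const,
      Finset.card_range, nsmul_eq_mul]
    field_simp
  rw [h3]
  unfold gapTerm
  rw [map_smul, map_sum, real_inner_smul_left, real_inner_smul_right, sum_inner, inner_sum]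
  linarith

/-- Cesàro means inherit weak limits. -/
lemma weakTendsto_mean {u : ℕ → X} {z : X} (hu : WeakLim atTop u z) :
    WeakTendsto (fun k => (k : ℝ)⁻¹ • ∑ j ∈ Finset.range k, u j) z := fun w => by
  simpa only [real_inner_smul_left, sum_inner] using (hu w).cesaro

lemma weakTendsto_of_succ {u : ℕ → X} {z : X} (hu : WeakLim atTop (fun k => u (k+1)) z) :
    WeakTendsto u z := fun w => (tendsto_add_atTop_iff_nat 1).mp (hu w)

/-- If every ultrafilter below `atTop` yields the weak limit `z`, the whole sequence converges. -/
lemma weakLim_of_ultrafilter {u : ℕ → X} {z : X}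
    (h : ∀ U : Ultrafilter ℕ, (U : Filter ℕ) ≤ atTop → WeakLim (U : Filter ℕ) u z) :
    WeakLim atTop u z := fun w =>
  tendsto_iff_ultrafilter _ _ _ |>.mpr fun U hU => h U hU w

/-- Theorem: weak and `O(1/k)` ergodic convergence of the preconditioned
Douglas--Rachford iteration. -/
theorem statement8
    (F : X → EReal) (G : Y → EReal) (K : X →L[ℝ] Y)
    (hFp : Proper F) (hFc : ConvexE F) (hFl : LowerSemicontinuous F)
    (hGp : Proper G) (hGc : ConvexE G) (hGl : LowerSemicontinuous G)
    (X₀ : Set X) (Y₀ : Set Y) (hX₀ : X₀ ⊆ edom F) (hY₀ : Y₀ ⊆ edom G)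
    (hX₀b : Bornology.IsBounded X₀) (hY₀b : Bornology.IsBounded Y₀)
    (hsad : ∃ xs ∈ X₀, ∃ ys ∈ Y₀, IsSaddle K F G xs ys)
    (σ τ : ℝ) (hσ : 0 < σ) (hτ : 0 < τ)
    (T M : X →L[ℝ] X)
    (hT : T = ContinuousLinearMap.id ℝ X
      + (σ * τ) • ((ContinuousLinearMap.adjoint K).comp K))
    (hM : IsFeasiblePrecond M T)
    (u : ℕ → X) (v : ℕ → Y) (ub : ℕ → X) (vb : ℕ → Y) (d : ℕ → X)
    (hiter : ∀ k : ℕ,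
      σ⁻¹ • (ub k - u (k+1)) ∈ ediff F (u (k+1)) ∧
      τ⁻¹ • (vb k - v (k+1)) ∈ ediff G (v (k+1)) ∧
      M (d (k+1) - d k) =
        ((2 : ℝ) • u (k+1) - ub k
          - σ • (ContinuousLinearMap.adjoint K) ((2 : ℝ) • v (k+1) - vb k)) - T (d k) ∧
      ub (k+1) = ub k - u (k+1) + d (k+1) ∧
      vb (k+1) = v (k+1) + τ • K (d (k+1)))
    (uerg : ℕ → X) (verg : ℕ → Y)
    (huerg : ∀ k : ℕ, uerg k = (k : ℝ)⁻¹ • ∑ j ∈ Finset.range k, u (j+1))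
    (hverg : ∀ k : ℕ, verg k = (k : ℝ)⁻¹ • ∑ j ∈ Finset.range k, v (j+1)) :
    ∃ xs : X, ∃ ys : Y, IsSaddle K F G xs ys ∧
      WeakTendsto u xs ∧ WeakTendsto v ys ∧
      WeakTendsto uerg xs ∧ WeakTendsto verg ys ∧
      ∀ k : ℕ, 1 ≤ k →
        gap K F G X₀ Y₀ (uerg k) (verg k) ≤
          (((k : ℝ)⁻¹ : ℝ) : EReal) *
            ⨆ x ∈ X₀, ⨆ y ∈ Y₀,
              (((‖ub 0 - x + σ • (ContinuousLinearMap.adjoint K) y‖ ^ 2 / (2 * σ)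
                + ⟪(M - T) (d 0 - x), d 0 - x⟫ / (2 * σ)
                + ‖vb 0 - y - τ • K x‖ ^ 2 / (2 * τ) : ℝ)) : EReal) := by
  have hpF : ∀ k, u (k+1) ∈ edom F := fun k => ediff_ne_top hFp (hiter k).1
  have hqG : ∀ k, v (k+1) ∈ edom G := fun k => ediff_ne_top hGp (hiter k).2.1
  have hO : Orbit K σ τ (M - T) ub d vb (fun k => u (k+1)) (fun k => v (k+1)) := by
    obtain ⟨hMs, hTs, -, -, -, hMT⟩ := hM
    refine ⟨hσ, hτ, fun x y => ?_, hMT, fun k => ?_, fun k => ?_, fun k => ?_⟩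
    · simp only [sub_apply, inner_sub_left, inner_sub_right, hMs, hTs]
    · rw [(hiter k).2.2.2.1]; abel
    · rw [(hiter k).2.2.2.2]; abel
    · obtain ⟨-, -, h3, h4, h5⟩ := hiter k
      have h6 : u (k+1) = ub k - ub (k+1) + d (k+1) := by rw [h4]; abel
      have h7 : v (k+1) = vb (k+1) - τ • K (d (k+1)) := by rw [h5]; abel
      have h8 : (M - T) (d k - d (k+1)) = -(M (d (k+1) - d k)) - T (d k - d (k+1)) := by
        rw [← map_neg, neg_sub]; rfl
      have hTa : ∀ x, T x = x + (σ * τ) • (ContinuousLinearMap.adjoint K) (K x) := by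
        intro x; rw [hT]; rfl
      rw [h8, h3, map_sub T, hTa (d (k+1)), h6, h7]
      simp only [map_sub, map_smul]
      module
  have hgc : ∀ x ∈ edom F, ∀ y ∈ edom G, ∀ k, gapTerm K F G x y (u (k+1)) (v (k+1))
      ≤ cross K σ τ (M - T) ub d vb x y k := fun x hx y hy k =>
    hO.gapTerm_le_cross hFp hGp (hiter k).1 (hiter k).2.1 hx hy
  have hnn : ∀ x y, IsSaddle K F G x y → ∀ k, 0 ≤ cross K σ τ (M - T) ub d vb x y k :=
    fun x y h k => (gapTerm_nonneg hFp hGp h (hpF k) (hqG k)).trans (hgc x h.1 y h.2.1 k)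
  obtain ⟨x0, hx0, y0, hy0, h0⟩ := hsad
  have hc0 := hnn x0 y0 h0
  have hcl : ∀ U : Ultrafilter ℕ, (U : Filter ℕ) ≤ atTop → ∃ xs ys, IsSaddle K F G xs ys ∧
      Cluster K σ τ ub d vb (fun k => u (k+1)) (fun k => v (k+1)) U xs ys := by
    intro U hU
    obtain ⟨xs, ys, h⟩ := hO.exists_cluster hc0 U hU
    exact ⟨xs, ys, isSaddle_of_weakLim hFp hFc hFl hGp hGc hGl h.hp h.hq hpF hqG
      (fun x y => cross K σ τ (M - T) ub d vb x y)
      (fun x y => (hO.tendsto_cross hc0 x y).mono_left hU) hgc, h⟩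
  have hyp : ((hyperfilter ℕ : Ultrafilter ℕ) : Filter ℕ) ≤ atTop := Nat.hyperfilter_le_atTop
  obtain ⟨xs, ys, hs, hC⟩ := hcl (hyperfilter ℕ) hyp
  have hall : ∀ U : Ultrafilter ℕ, (U : Filter ℕ) ≤ atTop →
      Cluster K σ τ ub d vb (fun k => u (k+1)) (fun k => v (k+1)) U xs ys := by
    intro U hU
    obtain ⟨x', y', hs', hC'⟩ := hcl U hU
    obtain ⟨rfl, rfl⟩ := hO.cluster_unique hU hyp hC' hC (hnn _ _ hs') (hnn _ _ hs)
    exact hC'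
  have hu : WeakLim atTop (fun k => u (k+1)) xs :=
    weakLim_of_ultrafilter fun U hU => (hall U hU).hp
  have hv : WeakLim atTop (fun k => v (k+1)) ys :=
    weakLim_of_ultrafilter fun U hU => (hall U hU).hq
  refine ⟨xs, ys, hs, weakTendsto_of_succ hu, weakTendsto_of_succ hv, ?_, ?_, ?_⟩
  · rw [funext huerg]; exact weakTendsto_mean hu
  · rw [funext hverg]; exact weakTendsto_mean hv
  intro k hk
  have hUd := (jensen_mean hFp hFc hpF hk).1
  have hVd := (jensen_mean hGp hGc hqG hk).1
  rw [huerg, hverg]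
  refine iSup₂_le fun x hx => iSup₂_le fun y hy => ?_
  have h1 := gapTerm_mean_le (K := K) hFp hFc hGp hGc hpF hqG x y hk
  have h2 : ∑ j ∈ Finset.range k, gapTerm K F G x y (u (j+1)) (v (j+1))
      ≤ lyap K σ τ (M - T) (ub 0) (d 0) (vb 0) x y := by
    have h3 : ∀ j, gapTerm K F G x y (u (j+1)) (v (j+1)) ≤
        lyap K σ τ (M - T) (ub j) (d j) (vb j) x y
        - lyap K σ τ (M - T) (ub (j+1)) (d (j+1)) (vb (j+1)) x y := fun j => by
      have h4 := hgc x (hX₀ hx) y (hY₀ hy) j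
      have h5 := hO.cross_eq_sub x y j
      have h6 := hO.incr_nonneg j
      linarith
    refine (Finset.sum_le_sum fun j _ => h3 j).trans ?_
    rw [Finset.sum_range_sub' (fun j => lyap K σ τ (M - T) (ub j) (d j) (vb j) x y)]
    have := hO.lyap_nonneg x y k
    linarith
  have h3 := h1.trans (mul_le_mul_of_nonneg_left h2 (by positivity))
  have h4 : ((lyap K σ τ (M - T) (ub 0) (d 0) (vb 0) x y : ℝ) : EReal) ≤
      ⨆ x ∈ X₀, ⨆ y ∈ Y₀, ((lyap K σ τ (M - T) (ub 0) (d 0) (vb 0) x y : ℝ) : EReal) :=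
    le_iSup₂_of_le x hx (le_iSup₂_of_le y hy le_rfl)
  refine le_trans ?_ (mul_le_mul_of_nonneg_left h4
    (EReal.coe_nonneg.mpr (by positivity : (0 : ℝ) ≤ (k : ℝ)⁻¹)))
  rw [← EReal.coe_toReal hUd (hFp.1 _), ← EReal.coe_toReal hVd (hGp.1 _), ← EReal.coe_add,
    ← EReal.coe_add, ← EReal.coe_mul, EReal.coe_le_coe_iff]
  refine le_trans (le_of_eq ?_) h3
  unfold gapTerm
  ring

end
end

section
/- Let σ, τ, γ > 0 and set ϑ = 1/√(1 + σγ), σ' = ϑσ, τ' = τ/ϑ. For any x⁺, x̃, x_ρ ∈ X and y⁺, ỹ, y_ρ ∈ Y, set x̄⁺ = x⁺ − x̃, ȳ⁺ = y⁺ − ỹ, x̂⁺ = x⁺ − ϑx̃, ŷ⁺ = y⁺ − ϑ⁻¹ỹ. Then the identity holds: ‖x̄⁺ − x_ρ + σK*y_ρ‖²/(2σ) + (γ/2)‖x⁺ − x_ρ‖² + ‖ȳ⁺ − y_ρ − τKx_ρ‖²/(2τ) = (1/ϑ)[‖x̂⁺ − x_ρ + σ'K*y_ρ‖²/(2σ')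 + ‖ŷ⁺ − y_ρ − τ'Kx_ρ‖²/(2τ')] + ((1−ϑ)/ϑ)[(1/τ)⟨y⁺ − y_ρ, τKx_ρ + ỹ⟩ − (1/σ)⟨x⁺ − x_ρ, σK*y_ρ − x̃⟩] − (σγ/(2τ))‖τKx_ρ + ỹ‖². -/
/-!
Put `u = xp - xρ`, `a = σ K* yρ - xt`, `v = yp - yρ` and `b = τ K xρ + yt`. The four vectors whose
norms are compared are `u + a`, `v - b`, `u + θ a` and `v - θ⁻¹ b`, so after expanding the squares
the identity compares the coefficients of `‖u‖²`, `⟪u, a⟫`, `‖a‖²`, `‖v‖²`, `⟪v, b⟫` and `‖b‖²`.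
The mixed terms are matched by the `(1 - θ) / θ` correction, and the `‖u‖²` and `‖b‖²` terms by
`θ⁻² = 1 + σ γ`.
-/

open scoped RealInnerProductSpace
open Filter

noncomputable section

variable {X Y : Type*} [NormedAddCommGroup X] [InnerProductSpace ℝ X] [CompleteSpace X]
  [NormedAddCommGroup Y] [InnerProductSpace ℝ Y] [CompleteSpace Y]

/-- Lemma: representation of the quadratic terms after the step-size change
`(σ, τ) → (ϑσ, τ/ϑ)` with `ϑ = 1/√(1 + σγ)`. -/
theorem statement11
    (K : X →L[ℝ] Y)
    (σ τ γ : ℝ) (hσ : 0 < σ) (hτ : 0 < τ) (hγ : 0 < γ)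
    (θ σ' τ' : ℝ)
    (hθ : θ = 1 / Real.sqrt (1 + σ * γ)) (hσ' : σ' = θ * σ) (hτ' : τ' = τ / θ)
    (xp xt xρ : X) (yp yt yρ : Y)
    (xb xh : X) (yb yh : Y)
    (hxb : xb = xp - xt) (hyb : yb = yp - yt)
    (hxh : xh = xp - θ • xt) (hyh : yh = yp - θ⁻¹ • yt) :
    ‖xb - xρ + σ • (ContinuousLinearMap.adjoint K) yρ‖ ^ 2 / (2 * σ)
      + (γ / 2) * ‖xp - xρ‖ ^ 2
      + ‖yb - yρ - τ • K xρ‖ ^ 2 / (2 * τ)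
    = θ⁻¹ * (‖xh - xρ + σ' • (ContinuousLinearMap.adjoint K) yρ‖ ^ 2 / (2 * σ')
        + ‖yh - yρ - τ' • K xρ‖ ^ 2 / (2 * τ'))
      + ((1 - θ) / θ) * (τ⁻¹ * ⟪yp - yρ, τ • K xρ + yt⟫
        - σ⁻¹ * ⟪xp - xρ, σ • (ContinuousLinearMap.adjoint K) yρ - xt⟫)
      - (σ * γ / (2 * τ)) * ‖τ • K xρ + yt‖ ^ 2 := by
  have hpos : 0 < 1 + σ * γ := by positivity
  have hθ0 : 0 < θ := by rw [hθ]; positivity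
  have hθ2 : θ ^ 2 * (1 + σ * γ) = 1 := by
    rw [hθ, div_pow, Real.sq_sqrt hpos.le]
    field_simp
  have hγ' : γ = (1 / θ ^ 2 - 1) / σ := by
    field_simp
    linarith
  subst hxb hyb hxh hyh hσ' hτ'
  have e1 : xp - xt - xρ + σ • (ContinuousLinearMap.adjoint K) yρ
      = (xp - xρ) + (σ • (ContinuousLinearMap.adjoint K) yρ - xt) := by abel
  have e2 : yp - yt - yρ - τ • K xρ = (yp - yρ) - (τ • K xρ + yt) := by abel
  have e3 : xp - θ • xt - xρ + (θ * σ) • (ContinuousLinearMap.adjoint K) yρ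
      = (xp - xρ) + θ • (σ • (ContinuousLinearMap.adjoint K) yρ - xt) := by module
  have e4 : yp - θ⁻¹ • yt - yρ - (τ / θ) • K xρ
      = (yp - yρ) - θ⁻¹ • (τ • K xρ + yt) := by
    rw [div_eq_mul_inv]
    module
  rw [e1, e2, e3, e4]
  -- Both sides depend only on the primal pair `u, a` and the dual pair `v, b`.
  generalize xp - xρ = u
  generalize σ • (ContinuousLinearMap.adjoint K) yρ - xt = a
  generalize yp - yρ = v
  generalize τ • K xρ + yt = b
  rw [norm_add_sq_real, norm_sub_sq_real, norm_add_sq_real, norm_sub_sq_real,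
    real_inner_smul_right, real_inner_smul_right, norm_smul, norm_smul, mul_pow, mul_pow,
    Real.norm_eq_abs, Real.norm_eq_abs, sq_abs, sq_abs]
  clear hθ hθ2 hpos
  rw [hγ']
  field_simp
  ring

end
end

section
/- Let σ, τ, γ > 0, set ϑ = 1/√(1 + σγ), and let (x⁺, y⁺, x̄⁺, ȳ⁺) be an accelerated update of (x̂, ŷ) with parameters σ, τ and ϑ_p = ϑ⁻¹, ϑ_d = ϑ; write x̃ = x⁺ − x̄⁺ and ỹ = y⁺ − ȳ⁺. Let c > 0 satisfy σ²γτ‖K‖² < c² < 1. Then for all x_ρ ∈ X and y_ρ ∈ Y: (1 − ϑ_p)⟨ŷ − ȳ⁺, K(x⁺ + x̄⁺ − x̂ − x_ρ)⟩ − (1 − ϑ_d)⟨y⁺ + ȳ⁺ − ŷ − y_ρ, K(x̂ − x̄⁺)⟩ + ((1−ϑ)/ϑ)[(1/τ)⟨y⁺ − y_ρ, τKx_ρ + ỹ⟩ − (1/σ)⟨x⁺ − x_ρ, σK*y_ρ − x̃⟩] − (σγ/(2τ))‖τKx_ρ + ỹ‖² ≥ −(c/(2σ))‖x̂ − x̄⁺‖²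 − (c/(2τ))‖ŷ − ȳ⁺‖² − [c(1+σγ)σγτ‖K‖²/(2(c² − σ²γτ‖K‖²))]·‖x⁺ − x_ρ‖². -/
/-!
The estimate is an identity followed by two Young inequalities. Put `a = x̂ - x̄⁺`, `b = ŷ - ȳ⁺`,
`u = x⁺ - x_ρ`, `s = θ⁻¹ = √(1 + σγ)` and
`w = u - θ a`. Inserting the formulas for `x̃` and `ỹ`, all terms containing `y⁺ - y_ρ` cancel, and
since `s² - 1 = σγ` the error terms equal `-σγ ⟪b, K w⟫ - (σγτ/2) ‖K w‖²`
(`error_terms_eq`). Young's inequality with weight `c/τ` on `b` splits off `(c/(2τ)) ‖b‖²`.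
With `κ = σ²γτ‖K‖² < c²` and `c < 1`, the remaining multiple of `‖K w‖²` is at most
`(κ (1 + σγ)/(2σc)) ‖w‖²`, and the weighted inequality `weighted_norm_sub_sq_le` splits `‖w‖²` into
the `‖a‖²` and `‖u‖²` terms.
-/

open scoped RealInnerProductSpace
open Filter

noncomputable section

variable {X Y : Type*} [NormedAddCommGroup X] [InnerProductSpace ℝ X] [CompleteSpace X]
  [NormedAddCommGroup Y] [InnerProductSpace ℝ Y] [CompleteSpace Y]

/-- One accelerated update step with parameters `σ, τ, tp, td` from `(xh, yh)` to
`(xp, yp, xbp, ybp)`. -/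
def IsAccUpdate (K : X →L[ℝ] Y) (F : X → EReal) (G : Y → EReal) (σ τ tp td : ℝ)
    (xh : X) (yh : Y) (xp : X) (yp : Y) (xbp : X) (ybp : Y) : Prop :=
  σ⁻¹ • (xh - xp) ∈ ediff F xp ∧
  τ⁻¹ • (yh - yp) ∈ ediff G yp ∧
  xp - xbp = σ • (ContinuousLinearMap.adjoint K) (yp + tp • (ybp - yh)) ∧
  yp - ybp = -(τ • K (xp + td • (xbp - xh)))

/-- Young's inequality for `‖u - a‖²` with weights `m / k` on `a` and `m / (m - k)` on `u`, multiplied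
by `k` so that `k = 0` is allowed. -/
theorem weighted_norm_sub_sq_le {H : Type*} [NormedAddCommGroup H] [InnerProductSpace ℝ H]
    (u a : H) (k m : ℝ) (hkm : k < m) :
    k * ‖u - a‖ ^ 2 ≤ m * k / (m - k) * ‖u‖ ^ 2 + m * ‖a‖ ^ 2 := by
  have hd : 0 < m - k := sub_pos.2 hkm
  -- After multiplication by `m - k`, the two sides differ by exactly this square.
  have h0 : 0 ≤ ‖k • u + (m - k) • a‖ ^ 2 := sq_nonneg _
  rw [norm_add_sq_real, norm_smul, norm_smul, mul_pow, mul_pow, real_inner_smul_left,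
    real_inner_smul_right, Real.norm_eq_abs, Real.norm_eq_abs, sq_abs, sq_abs] at h0
  rw [norm_sub_sq_real]
  have key : m * k / (m - k) * ‖u‖ ^ 2 + m * ‖a‖ ^ 2
      - k * (‖u‖ ^ 2 - 2 * ⟪u, a⟫ + ‖a‖ ^ 2)
      = (k ^ 2 * ‖u‖ ^ 2 + 2 * (k * ((m - k) * ⟪u, a⟫)) + (m - k) ^ 2 * ‖a‖ ^ 2) / (m - k) := by
    field_simp
    ring
  have := div_nonneg h0 hd.le
  linarith

/-- The error terms depend only on `ŷ - ȳ⁺` and `w = x⁺ - x_ρ - θ (x̂ - x̄⁺)`. -/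
theorem error_terms_eq (K : X →L[ℝ] Y) (σ τ γ θ : ℝ) (hσ : σ ≠ 0) (hτ : τ ≠ 0) (hθ : θ ≠ 0)
    (hs : σ * γ = θ⁻¹ ^ 2 - 1) (xh xp xbp xρ : X) (yh yp ybp yρ : Y)
    (hx : xp - xbp = σ • (ContinuousLinearMap.adjoint K) (yp + θ⁻¹ • (ybp - yh)))
    (hy : yp - ybp = -(τ • K (xp + θ • (xbp - xh)))) :
    (1 - θ⁻¹) * ⟪yh - ybp, K (xp + xbp - xh - xρ)⟫
        - (1 - θ) * ⟪yp + ybp - yh - yρ, K (xh - xbp)⟫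
        + ((1 - θ) / θ) * (τ⁻¹ * ⟪yp - yρ, τ • K xρ + (yp - ybp)⟫
          - σ⁻¹ * ⟪xp - xρ, σ • (ContinuousLinearMap.adjoint K) yρ - (xp - xbp)⟫)
        - (σ * γ / (2 * τ)) * ‖τ • K xρ + (yp - ybp)‖ ^ 2
      = -(σ * γ) * ⟪yh - ybp, K (xp - xρ - θ • (xh - xbp))⟫
        - σ * γ * τ / 2 * ‖K (xp - xρ - θ • (xh - xbp))‖ ^ 2 := by
  have e1 : τ • K xρ + (yp - ybp) = (-τ) • K (xp - xρ - θ • (xh - xbp)) := by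
    rw [hy]
    simp only [map_add, map_sub, map_smul]
    module
  have e2 : σ • (ContinuousLinearMap.adjoint K) yρ - (xp - xbp)
      = (-σ) • (ContinuousLinearMap.adjoint K) (yp - yρ - θ⁻¹ • (yh - ybp)) := by
    rw [hx]
    simp only [map_add, map_sub, map_smul]
    module
  have e3 : xp + xbp - xh - xρ = (xp - xρ) - (xh - xbp) := by abel
  have e4 : yp + ybp - yh - yρ = (yp - yρ) - (yh - ybp) := by abel
  rw [e1, e2, e3, e4, norm_smul, mul_pow, Real.norm_eq_abs, sq_abs, real_inner_smul_right,
    real_inner_smul_right, ContinuousLinearMap.adjoint_inner_right, hs]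
  generalize xp - xρ = u
  generalize xh - xbp = a
  generalize yp - yρ = v
  generalize yh - ybp = b
  generalize ‖K (u - θ • a)‖ ^ 2 = N
  simp only [map_sub, map_smul, inner_sub_right, inner_sub_left, real_inner_smul_right]
  rw [real_inner_comm v (K u), real_inner_comm b (K u)]
  field_simp
  ring

/-- Lemma: lower estimate of the error terms for the accelerated update
with `ϑ_p = ϑ⁻¹`, `ϑ_d = ϑ`. -/
theorem statement12
    (F : X → EReal) (G : Y → EReal) (K : X →L[ℝ] Y)
    (hFp : Proper F) (hGp : Proper G)
    (σ τ γ : ℝ) (hσ : 0 < σ) (hτ : 0 < τ) (hγ : 0 < γ)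
    (θ : ℝ) (hθ : θ = 1 / Real.sqrt (1 + σ * γ))
    (xh : X) (yh : Y) (xp : X) (yp : Y) (xbp : X) (ybp : Y)
    (hupd : IsAccUpdate K F G σ τ θ⁻¹ θ xh yh xp yp xbp ybp)
    (c : ℝ) (hc0 : 0 < c)
    (hc1 : σ ^ 2 * γ * τ * ‖K‖ ^ 2 < c ^ 2) (hc2 : c ^ 2 < 1) :
    ∀ xρ : X, ∀ yρ : Y,
      -(c / (2 * σ)) * ‖xh - xbp‖ ^ 2 - (c / (2 * τ)) * ‖yh - ybp‖ ^ 2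
        - (c * (1 + σ * γ) * σ * γ * τ * ‖K‖ ^ 2
            / (2 * (c ^ 2 - σ ^ 2 * γ * τ * ‖K‖ ^ 2))) * ‖xp - xρ‖ ^ 2
      ≤ (1 - θ⁻¹) * ⟪yh - ybp, K (xp + xbp - xh - xρ)⟫
        - (1 - θ) * ⟪yp + ybp - yh - yρ, K (xh - xbp)⟫
        + ((1 - θ) / θ) * (τ⁻¹ * ⟪yp - yρ, τ • K xρ + (yp - ybp)⟫
          - σ⁻¹ * ⟪xp - xρ, σ • (ContinuousLinearMap.adjoint K) yρ - (xp - xbp)⟫)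
        - (σ * γ / (2 * τ)) * ‖τ • K xρ + (yp - ybp)‖ ^ 2 := by
  obtain ⟨-, -, hx, hy⟩ := hupd
  intro xρ yρ
  have hp : 0 < 1 + σ * γ := by positivity
  have hθ0 : 0 < θ := by rw [hθ]; positivity
  have hθ2 : θ ^ 2 * (1 + σ * γ) = 1 := by
    rw [hθ, div_pow, Real.sq_sqrt hp.le]
    field_simp
  have hs : σ * γ = θ⁻¹ ^ 2 - 1 := by
    field_simp
    linarith
  rw [error_terms_eq K σ τ γ θ hσ.ne' hτ.ne' hθ0.ne' hs xh xp xbp xρ yh yp ybp yρ hx hy]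
  have hc1' : c ≤ 1 := by nlinarith
  have hKw := K.le_opNorm (xp - xρ - θ • (xh - xbp))
  have hw := weighted_norm_sub_sq_le (xp - xρ) (θ • (xh - xbp)) _ _ hc1
  rw [norm_smul, Real.norm_eq_abs, mul_pow, sq_abs] at hw
  clear hx hy
  generalize xp - xρ - θ • (xh - xbp) = w at *
  generalize xp - xρ = u at *
  generalize xh - xbp = a at *
  generalize yh - ybp = b at *
  have hKw2 : ‖K w‖ ^ 2 ≤ ‖K‖ ^ 2 * ‖w‖ ^ 2 := by
    rw [← mul_pow]
    exact pow_le_pow_left₀ (norm_nonneg _) hKw 2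
  have hb : σ * γ * ⟪b, K w⟫
      ≤ c / (2 * τ) * ‖b‖ ^ 2 + σ ^ 2 * γ ^ 2 * τ / (2 * c) * ‖K w‖ ^ 2 := by
    have h1 : σ * γ * ⟪b, K w⟫ ≤ σ * γ * (‖b‖ * ‖K w‖) :=
      mul_le_mul_of_nonneg_left (real_inner_le_norm _ _) (by positivity)
    have h2 : c / (2 * τ) * ‖b‖ ^ 2 + σ ^ 2 * γ ^ 2 * τ / (2 * c) * ‖K w‖ ^ 2
        - σ * γ * (‖b‖ * ‖K w‖) = (c * ‖b‖ - σ * γ * τ * ‖K w‖) ^ 2 / (2 * c * τ) := by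
      field_simp
      ring
    have h3 : 0 ≤ (c * ‖b‖ - σ * γ * τ * ‖K w‖) ^ 2 / (2 * c * τ) := by positivity
    linarith
  have h4 : (σ * γ * τ / 2 + σ ^ 2 * γ ^ 2 * τ / (2 * c)) * ‖K w‖ ^ 2
      ≤ σ * γ * τ * (1 + σ * γ) / (2 * c) * (‖K‖ ^ 2 * ‖w‖ ^ 2) := by
    refine mul_le_mul ?_ hKw2 (by positivity) (by positivity)
    have : σ * γ * τ * (1 + σ * γ) / (2 * c) - (σ * γ * τ / 2 + σ ^ 2 * γ ^ 2 * τ / (2 * c))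
        = σ * γ * τ * (1 - c) / (2 * c) := by
      field_simp
      ring
    have h : 0 ≤ σ * γ * τ * (1 - c) / (2 * c) :=
      div_nonneg (mul_nonneg (by positivity) (by linarith)) (by positivity)
    linarith
  have h5 := mul_le_mul_of_nonneg_left hw
    (show 0 ≤ (1 + σ * γ) / (2 * σ * c) by positivity)
  have hd : c ^ 2 - σ ^ 2 * γ * τ * ‖K‖ ^ 2 ≠ 0 := (sub_pos.2 hc1).ne'
  have h6 : (1 + σ * γ) / (2 * σ * c) * (σ ^ 2 * γ * τ * ‖K‖ ^ 2 * ‖w‖ ^ 2)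
      = σ * γ * τ * (1 + σ * γ) / (2 * c) * (‖K‖ ^ 2 * ‖w‖ ^ 2) := by
    field_simp
  have h7 : (1 + σ * γ) / (2 * σ * c)
      * (c ^ 2 * (σ ^ 2 * γ * τ * ‖K‖ ^ 2) / (c ^ 2 - σ ^ 2 * γ * τ * ‖K‖ ^ 2) * ‖u‖ ^ 2
        + c ^ 2 * (θ ^ 2 * ‖a‖ ^ 2))
      = c * (1 + σ * γ) * σ * γ * τ * ‖K‖ ^ 2
          / (2 * (c ^ 2 - σ ^ 2 * γ * τ * ‖K‖ ^ 2)) * ‖u‖ ^ 2 + c / (2 * σ) * ‖a‖ ^ 2 := by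
    -- `θ² (1 + σγ) = 1` turns the coefficient of `‖a‖²` into `c / (2σ)`.
    have h8 : (1 + σ * γ) / (2 * σ * c) * (c ^ 2 * (θ ^ 2 * ‖a‖ ^ 2))
        = c / (2 * σ) * (θ ^ 2 * (1 + σ * γ)) * ‖a‖ ^ 2 := by
      field_simp
    rw [mul_add, h8, hθ2, mul_one]
    congr 1
    generalize c ^ 2 - σ ^ 2 * γ * τ * ‖K‖ ^ 2 = d at *
    field_simp
  linarith

end
end

section
/- Let σ₀ > 0 and γ > 0, and define recursively ϑₖ = 1/√(1 + σₖγ) and σₖ₊₁ = ϑₖσₖ. Let λₖ = ∏_{j=0}^{k−1} ϑⱼ⁻¹ (with λ₀ = 1) and νₖ = (∑_{j=0}^{k−1} λⱼ)⁻¹. Then for all k ≥ 1: 1 + kσ₀γ/(√(1+σ₀γ) + 1) ≤ λₖ ≤ 1 + kσ₀γ/2 and νₖ ≤ [k + (k−1)kσ₀γ/(2(√(1+σ₀γ) + 1))]⁻¹; in particular, νₖ ≤ 4(√(1+σ₀γ) + 1)/(σ₀γ·k²) for all k ≥ 2. -/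
/-!
The product `lam k * σ k` is constant, equal to `σ₀`, because passing from `k` to `k + 1` multiplies
`σ` by `θ k` and `lam` by `(θ k)⁻¹`.  Hence, with `a = σ₀ γ`, the sequence `lam` satisfies the
autonomous recursion `lam (k + 1) = lam k * √(1 + a / lam k)`, whose increment is
`a / (√(1 + a / lam k) + 1)`.  Since `lam k ≥ 1`, the root lies between `1` and `√(1 + a)`, so each
increment lies between `a / (√(1 + a) + 1)` and `a / 2` (`increment_bounds`).  Adding up increments
bounds `lam k` on both sides; adding up the lower bounds gives the quadratic lower bound on
`∑ j < k, lam j`, the reciprocal of `ν k`.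
-/

open Filter

noncomputable section

/-- One step of the recursion `x ↦ x √(1 + a / x)` on `[1, ∞)`: the increment is
`a / (√(1 + a / x) + 1)`, where the root lies in `[1, √(1 + a)]`. -/
lemma increment_bounds {a x : ℝ} (ha : 0 < a) (hx : 1 ≤ x) :
    x + a / (Real.sqrt (1 + a) + 1) ≤ x * Real.sqrt (1 + a / x) ∧
      x * Real.sqrt (1 + a / x) ≤ x + a / 2 := by
  have hx0 : 0 < x := by linarith
  have hax : 0 < a / x := by positivity
  set r := Real.sqrt (1 + a / x) with hr
  have hr1 : 1 ≤ r := Real.one_le_sqrt.mpr (by linarith)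
  have hr2 : r ≤ Real.sqrt (1 + a) :=
    Real.sqrt_le_sqrt (by have := div_le_self ha.le hx; linarith)
  have hsq : r ^ 2 = 1 + a / x := Real.sq_sqrt (by linarith)
  have hstep : x * r = x + a / (r + 1) := by
    have h : x * r ^ 2 = x + a := by rw [hsq]; field_simp
    have hrp : r + 1 ≠ 0 := by linarith
    field_simp
    linarith
  rw [hstep]
  constructor
  · gcongr
  · gcongr
    linarith

/-- Lemma: growth estimates for the weights of the accelerated
Douglas--Rachford iteration. -/
theorem statement14
    (σ₀ γ : ℝ) (hσ₀ : 0 < σ₀) (hγ : 0 < γ)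
    (σ θ lam ν : ℕ → ℝ)
    (hσ0 : σ 0 = σ₀)
    (hθ : ∀ k : ℕ, θ k = 1 / Real.sqrt (1 + σ k * γ))
    (hσ : ∀ k : ℕ, σ (k+1) = θ k * σ k)
    (hlam : ∀ k : ℕ, lam k = ∏ j ∈ Finset.range k, (θ j)⁻¹)
    (hν : ∀ k : ℕ, ν k = (∑ j ∈ Finset.range k, lam j)⁻¹) :
    (∀ k : ℕ, 1 ≤ k →
      1 + k * σ₀ * γ / (Real.sqrt (1 + σ₀ * γ) + 1) ≤ lam k ∧
      lam k ≤ 1 + k * σ₀ * γ / 2 ∧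
      ν k ≤ ((k : ℝ) + (k - 1) * k * σ₀ * γ / (2 * (Real.sqrt (1 + σ₀ * γ) + 1)))⁻¹) ∧
    ∀ k : ℕ, 2 ≤ k →
      ν k ≤ 4 * (Real.sqrt (1 + σ₀ * γ) + 1) / (σ₀ * γ * (k : ℝ) ^ 2) := by
  set a := σ₀ * γ with ha_def
  have ha : 0 < a := mul_pos hσ₀ hγ
  set s := Real.sqrt (1 + a) + 1 with hs_def
  have hs : 0 < s := by positivity
  have hlam0 : lam 0 = 1 := by simp [hlam]
  have hlam_succ : ∀ k, lam (k + 1) = lam k * Real.sqrt (1 + σ k * γ) := fun k => by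
    rw [hlam, hlam, Finset.prod_range_succ, hθ, one_div, inv_inv]
  have hσpos : ∀ k, 0 < σ k := by
    intro k
    induction k with
    | zero => rwa [hσ0]
    | succ k ih => rw [hσ, hθ]; positivity
  have hinv : ∀ k, lam k * σ k = σ₀ := by
    intro k
    induction k with
    | zero => rw [hlam0, hσ0, one_mul]
    | succ k ih =>
      have h := hσpos k
      have hr : Real.sqrt (1 + σ k * γ) ≠ 0 := by positivity
      rw [hlam_succ, hσ, hθ, ← ih]
      field_simp
  have hbound : ∀ k : ℕ, 1 + k * (a / s) ≤ lam k ∧ lam k ≤ 1 + k * (a / 2) := by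
    intro k
    induction k with
    | zero => simp [hlam0]
    | succ k ih =>
      have h1 : 1 ≤ lam k := by
        have : 0 ≤ (k : ℝ) * (a / s) := by positivity
        linarith [ih.1]
      have hσk : σ k * γ = a / lam k := by
        rw [eq_div_iff (by linarith), ha_def, ← hinv k]
        ring
      have h := increment_bounds ha h1
      rw [hlam_succ, hσk]
      push_cast
      constructor <;> linarith [h.1, h.2, ih.1, ih.2]
  have hsum : ∀ k : ℕ, (k : ℝ) + (k - 1) * k * (a / (2 * s)) ≤ ∑ j ∈ Finset.range k, lam j := by
    intro k
    induction k with
    | zero => simp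
    | succ k ih =>
      rw [Finset.sum_range_succ]
      have h := (hbound k).1
      have h2 : a / s = 2 * (a / (2 * s)) := by field_simp
      rw [h2] at h
      push_cast
      linarith
  have hν_le : ∀ k : ℕ, 1 ≤ k →
      ν k ≤ ((k : ℝ) + (k - 1) * k * (a / (2 * s)))⁻¹ := by
    intro k hk
    have hk' : (1 : ℝ) ≤ k := by exact_mod_cast hk
    have h : 0 ≤ ((k : ℝ) - 1) * k * (a / (2 * s)) :=
      mul_nonneg (mul_nonneg (by linarith) (by linarith)) (by positivity)
    rw [hν]
    exact inv_anti₀ (by linarith) (hsum k)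
  refine ⟨fun k hk => ⟨?_, ?_, ?_⟩, fun k hk => ?_⟩
  · convert (hbound k).1 using 2
    rw [ha_def]; ring
  · convert (hbound k).2 using 2
    rw [ha_def]; ring
  · convert hν_le k hk using 3
    rw [ha_def]; ring
  · have hk' : (2 : ℝ) ≤ k := by exact_mod_cast hk
    have hk0 : (0 : ℝ) < k := by linarith
    refine (hν_le k (by omega)).trans ?_
    rw [← inv_div (a * (k : ℝ) ^ 2) (4 * s)]
    refine inv_anti₀ (by positivity) ?_
    -- For `k ≥ 2` the quadratic term alone suffices, as `k - 1 ≥ k / 2`.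
    have h : (k : ℝ) / 2 * k * (a / (2 * s)) ≤ (k - 1) * k * (a / (2 * s)) := by
      gcongr
      linarith
    have h2 : a * (k : ℝ) ^ 2 / (4 * s) = (k : ℝ) / 2 * k * (a / (2 * s)) := by
      field_simp
      norm_num
    linarith

end
end
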